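/- Let z ∈ ℂ with Re(z) > 0. Then ψ₁(z) − (1/2) log²(z) = −log(z)/z + ∫_0^∞ ( 1/(e^{t} − 1) − 1/t ) e^{−zt} ( γ + log(t) ) dt. -/

import Mathlib

open Filter Topology MeasureTheory

noncomputable def eulerGamma : ℝ := Real.eulerMascheroniConstant

noncomputable def gamma1 : ℝ :=
  limUnder atTop (fun n : ℕ => ∑ j ∈ Finset.Icc 1 n, Real.log j / j - (Real.log n) ^ 2 / 2)

noncomputable def psi1 (z : ℂ) : ℂ :=
  -(gamma1 : ℂ) - Complex.log z / z -
    ∑' n : ℕ, (Complex.log (((n : ℂ) + 1) + z) / (((n : ℂ) + 1) + z)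
      - Complex.log ((n : ℂ) + 1) / ((n : ℂ) + 1))

/-- The weight. -/
noncomputable def wgt (t : ℝ) : ℂ := (eulerGamma : ℂ) + (Real.log t : ℂ)

noncomputable def bker (t : ℝ) : ℂ := 1 / (Complex.exp (t : ℂ) - 1) - 1 / (t : ℂ)

noncomputable def FF (z : ℂ) : ℂ :=
  ∫ t in Set.Ioi (0:ℝ), bker t * Complex.exp (-z * (t : ℂ)) * wgt t

lemma exp_log_integrable (w : ℂ) (hw : 0 < w.re) :
    MellinConvergent (fun t => Real.log t • Complex.exp (-w * t)) 1 ∧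
      HasDerivAt (mellin (fun t : ℝ => Complex.exp (-w * t)))
        (mellin (fun t => Real.log t • Complex.exp (-w * t)) 1) 1 := by
  set f : ℝ → ℂ := fun t => Complex.exp (-w * t) with hf
  have hcont : Continuous f := by rw [hf]; fun_prop
  have htop : f =O[atTop] (fun t : ℝ => t ^ (-(2:ℝ))) := by
    have h := (isLittleO_exp_neg_mul_rpow_atTop hw (-2)).isBigO
    refine Asymptotics.IsBigO.trans ?_ h
    refine Asymptotics.IsBigO.of_bound 1 (Eventually.of_forall fun t => ?_)
    simp [hf, Complex.norm_exp]
  have hbot : f =O[𝓝[>] 0] (fun t : ℝ => t ^ (-(0:ℝ))) := by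
    simp only [neg_zero, Real.rpow_zero]
    exact (hcont.continuousAt.isBigO_one ℝ).mono nhdsWithin_le_nhds
  exact mellin_hasDerivAt_of_isBigO_rpow (s := 1)
    (hcont.locallyIntegrable.locallyIntegrableOn _) htop (by norm_num) hbot (by norm_num)

lemma exp_log_integrableOn (w : ℂ) (hw : 0 < w.re) :
    IntegrableOn (fun t : ℝ => Complex.exp (-w * t) * (Real.log t : ℂ)) (Set.Ioi 0) := by
  have h1 := (exp_log_integrable w hw).1
  unfold MellinConvergent at h1
  refine h1.congr_fun (fun t _ => ?_) measurableSet_Ioi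
  simp [mul_comm]

lemma exp_log_int_real (r : ℝ) (hw : 0 < r) :
    ∫ t in Set.Ioi (0:ℝ), Complex.exp (-(r:ℂ) * t) * (Real.log t : ℂ) =
      -(eulerGamma : ℂ) / r - Complex.log r / r := by
  have hw0 : (r:ℂ) ≠ 0 := by exact_mod_cast hw.ne'
  have harg : (r:ℂ).arg ≠ Real.pi := by
    rw [Complex.arg_ofReal_of_nonneg hw.le]; exact Real.pi_ne_zero.symm
  have h2 := (exp_log_integrable r (by simpa using hw)).2
  set f : ℝ → ℂ := fun t => Complex.exp (-(r:ℂ) * t) with hf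
  have hm : ∀ᶠ s in 𝓝 (1:ℂ), mellin f s = (1 / (r:ℂ)) ^ s * Complex.Gamma s := by
    have : ∀ᶠ s in 𝓝 (1:ℂ), 0 < s.re :=
      (Complex.continuous_re.continuousAt).eventually (lt_mem_nhds (by norm_num))
    filter_upwards [this] with s hs
    rw [← Complex.integral_cpow_mul_exp_neg_mul_Ioi hs hw]
    simp [mellin, hf]
  have h3 : HasDerivAt (fun s : ℂ => (1 / (r:ℂ)) ^ s * Complex.Gamma s)
      ((1 / (r:ℂ)) ^ (1:ℂ) * Complex.log (1 / (r:ℂ)) * 1 * Complex.Gamma 1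
        + (1 / (r:ℂ)) ^ (1:ℂ) * (-(eulerGamma : ℂ))) 1 := by
    refine HasDerivAt.mul ?_ Complex.hasDerivAt_Gamma_one
    exact (hasDerivAt_id (1:ℂ)).const_cpow (Or.inl (by simpa using hw0))
  have h4 := (h2.congr_of_eventuallyEq (hm.mono fun _ h => h.symm)).unique h3
  simp only [mellin, sub_self, Complex.cpow_zero, one_smul, Complex.cpow_one, Complex.Gamma_one,
      one_div, Complex.log_inv _ harg] at h4
  rw [show (∫ t in Set.Ioi (0:ℝ), Complex.exp (-(r:ℂ) * t) * (Real.log t : ℂ)) =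
      ∫ t in Set.Ioi (0:ℝ), Real.log t • f t by simp [hf, mul_comm], h4]
  field_simp
  ring

lemma exp_log_diff (w : ℂ) (hw : 0 < w.re) : DifferentiableAt ℂ
    (fun w : ℂ => ∫ t in Set.Ioi (0:ℝ), Complex.exp (-w * t) * (Real.log t : ℂ)) w := by
  set σ : ℝ := w.re / 2 with hσ
  have hσ0 : 0 < σ := by rw [hσ]; linarith
  have hb := (exp_log_integrableOn ((σ / 2 : ℝ) : ℂ)
    (by rw [Complex.ofReal_re]; linarith)).norm.const_mul (2 / σ)
  refine (hasDerivAt_integral_of_dominated_loc_of_deriv_le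
    (F := fun (w : ℂ) (t : ℝ) => Complex.exp (-w * t) * (Real.log t : ℂ))
    (F' := fun (w : ℂ) (t : ℝ) => (Complex.exp (-w * t) * (-(t:ℂ))) * (Real.log t : ℂ))
    (Metric.ball_mem_nhds w hσ0) ?_ (exp_log_integrableOn w hw) ?_ ?_ hb ?_).2.differentiableAt
  · refine Eventually.of_forall fun v => Measurable.aestronglyMeasurable ?_
    fun_prop
  · refine Measurable.aestronglyMeasurable ?_
    fun_prop
  · filter_upwards [ae_restrict_mem measurableSet_Ioi] with t ht v hv
    have ht' := Set.mem_Ioi.1 ht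
    have hv' : σ ≤ v.re := by
      have h1 := (Complex.abs_re_le_norm (v - w)).trans (mem_ball_iff_norm.1 hv).le
      rw [Complex.sub_re, abs_le] at h1
      linarith [h1.1]
    rw [norm_mul, norm_mul, norm_mul, ← mul_assoc]
    refine mul_le_mul_of_nonneg_right ?_ (norm_nonneg _)
    rw [Complex.norm_exp, Complex.norm_exp, norm_neg, Complex.norm_real, Real.norm_of_nonneg ht'.le]
    have e1 : (-v * t).re = -(v.re * t) := by simp
    have e2 : (-((σ / 2 : ℝ) : ℂ) * t).re = -(σ / 2 * t) := by
      rw [← Complex.ofReal_neg, ← Complex.ofReal_mul, Complex.ofReal_re]; ring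
    rw [e1, e2]
    have h1 : Real.exp (-(v.re * t)) ≤ Real.exp (-(σ / 2 * t)) * Real.exp (-(σ / 2 * t)) := by
      rw [← Real.exp_add, Real.exp_le_exp]; nlinarith
    have h2 : Real.exp (-(σ / 2 * t)) * t ≤ 2 / σ := by
      rw [Real.exp_neg, inv_mul_le_iff₀ (Real.exp_pos _)]
      have := Real.add_one_le_exp (σ / 2 * t)
      rw [mul_div_assoc', le_div_iff₀ hσ0]
      linarith
    calc _ ≤ Real.exp (-(σ / 2 * t)) * Real.exp (-(σ / 2 * t)) * t := by gcongr
      _ = (Real.exp (-(σ / 2 * t)) * t) * Real.exp (-(σ / 2 * t)) := by ring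
      _ ≤ _ := by gcongr
  · filter_upwards with t v _
    refine HasDerivAt.mul_const ?_ _
    have h : HasDerivAt (fun v : ℂ => -v * (t:ℂ)) (-(t:ℂ)) v := by
      simpa using ((hasDerivAt_id v).neg).mul_const (t:ℂ)
    exact h.cexp

lemma exp_log_int (w : ℂ) (hw : 0 < w.re) :
    IntegrableOn (fun t : ℝ => Complex.exp (-w * t) * (Real.log t : ℂ)) (Set.Ioi 0) ∧
    ∫ t in Set.Ioi (0:ℝ), Complex.exp (-w * t) * (Real.log t : ℂ) =
      -(eulerGamma : ℂ) / w - Complex.log w / w := by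
  refine ⟨exp_log_integrableOn w hw, ?_⟩
  have hopen : IsOpen {w : ℂ | 0 < w.re} := isOpen_lt continuous_const Complex.continuous_re
  have hA : AnalyticOnNhd ℂ (fun w : ℂ => ∫ t in Set.Ioi (0:ℝ),
      Complex.exp (-w * t) * (Real.log t : ℂ)) {w : ℂ | 0 < w.re} :=
    DifferentiableOn.analyticOnNhd (fun v hv => (exp_log_diff v hv).differentiableWithinAt) hopen
  have hB : AnalyticOnNhd ℂ (fun w : ℂ => -(eulerGamma : ℂ) / w - Complex.log w / w)
      {w : ℂ | 0 < w.re} := by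
    refine DifferentiableOn.analyticOnNhd (fun v hv => ?_) hopen
    have hv1 : v ∈ Complex.slitPlane := Or.inl hv
    have hv0 : v ≠ 0 := Complex.slitPlane_ne_zero hv1
    have := (Complex.hasDerivAt_log hv1).differentiableAt
    exact (((differentiableAt_const _).div differentiableAt_id hv0).sub
      (this.div differentiableAt_id hv0)).differentiableWithinAt
  have hconn : IsPreconnected {w : ℂ | 0 < w.re} := (convex_halfSpace_re_gt 0).isPreconnected
  refine hA.eqOn_of_preconnected_of_frequently_eq hB hconn (z₀ := 1) (by simp) ?_ hw
  have hseq : Tendsto (fun n : ℕ => ((1 + 1 / ((n:ℝ) + 1) : ℝ) : ℂ)) atTop (𝓝[≠] 1) := by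
    refine tendsto_nhdsWithin_iff.2 ⟨?_, Eventually.of_forall fun n => ?_⟩
    · have := (tendsto_one_div_add_atTop_nhds_zero_nat (𝕜 := ℝ)).const_add 1
      have h2 := (Complex.continuous_ofReal.tendsto _).comp this
      simpa [Function.comp_def] using h2
    · have : (0:ℝ) < 1 / ((n:ℝ) + 1) := by positivity
      rw [Set.mem_compl_singleton_iff]
      intro h
      have h' : (1 + 1 / ((n:ℝ) + 1) : ℝ) = 1 := by exact_mod_cast h
      linarith
  exact hseq.frequently (Frequently.of_forall fun n => exp_log_int_real _ (by positivity))

lemma exp_wgt_integrable (w : ℂ) (hw : 0 < w.re) :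
    IntegrableOn (fun t : ℝ => Complex.exp (-w * t) * wgt t) (Set.Ioi 0) := by
  have h1 := (exp_log_int w hw).1
  have h2 : IntegrableOn (fun t : ℝ => Complex.exp (-w * t) * (eulerGamma : ℂ)) (Set.Ioi 0) :=
    (integrableOn_exp_mul_complex_Ioi (a := -w) (by simpa using hw) 0).mul_const _
  refine (h2.add h1).congr_fun (fun t _ => ?_) measurableSet_Ioi
  simp [wgt, mul_add]

lemma exp_wgt_integral (w : ℂ) (hw : 0 < w.re) :
    ∫ t in Set.Ioi (0:ℝ), Complex.exp (-w * t) * wgt t = - (Complex.log w / w) := by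
  obtain ⟨h1, h3⟩ := exp_log_int w hw
  have h2 : IntegrableOn (fun t : ℝ => Complex.exp (-w * t) * (eulerGamma : ℂ)) (Set.Ioi 0) :=
    (integrableOn_exp_mul_complex_Ioi (a := -w) (by simpa using hw) 0).mul_const _
  simp only [wgt, mul_add]
  rw [integral_add h2 h1, h3, integral_mul_const,
    integral_exp_mul_complex_Ioi (a := -w) (by simpa using hw) 0]
  simp
  ring

lemma ker_norm_le {t : ℝ} (ht : 0 < t) : ‖bker t‖ ≤ 1 := by
  have h : bker t = ((1 / (Real.exp t - 1) - 1 / t : ℝ) : ℂ) := by simp [bker]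
  rw [h, Complex.norm_real, Real.norm_eq_abs, abs_le]
  have h1 : t < Real.exp t - 1 := by linarith [Real.add_one_lt_exp ht.ne']
  have h0 : 0 < Real.exp t - 1 := by linarith
  have h2 : Real.exp t - 1 ≤ t * Real.exp t := by
    have h3 := Real.add_one_le_exp (-t)
    have h4 : Real.exp (-t) * Real.exp t = 1 := by rw [← Real.exp_add]; simp
    nlinarith [Real.exp_pos t]
  rw [div_sub_div _ _ h0.ne' ht.ne']
  constructor
  · rw [le_div_iff₀ (by positivity)]; nlinarith
  · rw [div_le_iff₀ (by positivity)]; nlinarith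

lemma meas_bker : Measurable bker := by unfold bker; fun_prop
lemma meas_wgt : Measurable wgt := by unfold wgt; fun_prop

lemma FF_integrable (z : ℂ) (hz : 0 < z.re) :
    IntegrableOn (fun t : ℝ => bker t * Complex.exp (-z * (t : ℂ)) * wgt t) (Set.Ioi 0) := by
  refine Integrable.mono (exp_wgt_integrable z hz) ?_ ?_
  · exact ((meas_bker.mul (by fun_prop)).mul meas_wgt).aestronglyMeasurable
  · filter_upwards [ae_restrict_mem measurableSet_Ioi] with t ht
    rw [mul_assoc, norm_mul]
    exact mul_le_of_le_one_left (norm_nonneg _) (ker_norm_le ht)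

lemma int_step (z : ℂ) (hz : 0 < z.re) :
    IntegrableOn (fun t : ℝ => (1 - Complex.exp (-(t:ℂ))) / t * Complex.exp (-z * t) * wgt t)
      (Set.Ioi 0) ∧
    ∫ t in Set.Ioi (0:ℝ), (1 - Complex.exp (-(t:ℂ))) / t * Complex.exp (-z * t) * wgt t =
     -(Complex.log (z + 1) ^ 2 / 2 - Complex.log z ^ 2 / 2) := by
  have hre : ∀ s : ℝ, 0 ≤ s → 0 < (z + s).re := fun s hs => by simp; linarith
  have hint : Integrable (fun p : ℝ × ℝ => Complex.exp (-(z + p.2) * p.1) * wgt p.1)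
      ((volume.restrict (Set.Ioi 0)).prod (volume.restrict (Set.Ioc 0 1))) := by
    have hb : Integrable (fun p : ℝ × ℝ => (Complex.exp (-z * p.1) * wgt p.1) * (1:ℂ))
        ((volume.restrict (Set.Ioi 0)).prod (volume.restrict (Set.Ioc 0 1))) :=
      Integrable.mul_prod (f := fun t : ℝ => Complex.exp (-z * t) * wgt t) (g := fun _ => (1:ℂ))
        (exp_wgt_integrable z hz) (by simp)
    refine hb.mono ?_ ?_
    · refine Measurable.aestronglyMeasurable ?_
      exact Measurable.mul (by fun_prop) (meas_wgt.comp measurable_fst)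
    · rw [Measure.prod_restrict]
      filter_upwards [ae_restrict_mem (measurableSet_Ioi.prod measurableSet_Ioc)] with p hp
      obtain ⟨h1, h2⟩ := hp
      simp only [Set.mem_Ioi, Set.mem_Ioc] at h1 h2
      rw [mul_one, norm_mul, norm_mul]
      gcongr
      rw [Complex.norm_exp, Complex.norm_exp, Real.exp_le_exp]
      simp
      nlinarith [h2.1]
  have hin : ∀ t ∈ Set.Ioi (0:ℝ), (∫ s in Set.Ioc (0:ℝ) 1, Complex.exp (-(z + s) * t) * wgt t) =
      (1 - Complex.exp (-(t:ℂ))) / t * Complex.exp (-z * t) * wgt t := by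
    intro t ht
    have ht0 : (t:ℂ) ≠ 0 := by exact_mod_cast (ne_of_gt ht)
    rw [integral_mul_const, ← intervalIntegral.integral_of_le zero_le_one]
    congr 1
    have : ∀ s : ℝ, Complex.exp (-(z + s) * t) = Complex.exp (-z * t) * Complex.exp ((-t:ℂ) * s) := by
      intro s; rw [← Complex.exp_add]; ring_nf
    simp only [this]
    rw [intervalIntegral.integral_const_mul, integral_exp_mul_complex (neg_ne_zero.2 ht0)]
    simp
    field_simp
    ring
  constructor
  · refine Integrable.congr hint.integral_prod_left ?_
    filter_upwards [ae_restrict_mem measurableSet_Ioi] with t ht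
    exact hin t ht
  · rw [← setIntegral_congr_fun measurableSet_Ioi hin, integral_integral_swap hint]
    have h5 : ∀ s ∈ Set.Ioc (0:ℝ) 1, (∫ t in Set.Ioi (0:ℝ), Complex.exp (-(z + s) * t) * wgt t) =
        -(Complex.log (z + s) / (z + s)) := fun s hs => exp_wgt_integral _ (hre s hs.1.le)
    rw [setIntegral_congr_fun measurableSet_Ioc h5, integral_neg,
      ← intervalIntegral.integral_of_le zero_le_one]
    have hne : ∀ s ∈ Set.uIcc (0:ℝ) 1, z + s ∈ Complex.slitPlane := by
      intro s hs
      rw [Set.uIcc_of_le zero_le_one] at hs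
      exact Or.inl (hre s hs.1)
    rw [intervalIntegral.integral_eq_sub_of_hasDerivAt
      (f := fun s : ℝ => Complex.log (z + s) ^ 2 / 2)]
    · simp
    · intro s hs
      have h6 : HasDerivAt (fun s : ℝ => z + (s:ℂ)) 1 s :=
        (Complex.ofRealCLM.hasDerivAt (x := s)).const_add z
      have h7 := ((h6.clog_real (hne s hs)).pow 2).div_const 2
      refine h7.congr_deriv ?_
      push_cast
      ring
    · apply ContinuousOn.intervalIntegrable
      refine ContinuousOn.div (ContinuousOn.clog (by fun_prop) hne) (by fun_prop) ?_
      intro s hs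
      exact Complex.slitPlane_ne_zero (hne s hs)

lemma FF_step (z : ℂ) (hz : 0 < z.re) :
    FF z - FF (z + 1) = -(Complex.log (z + 1) / (z + 1)) +
      (Complex.log (z + 1) ^ 2 / 2 - Complex.log z ^ 2 / 2) := by
  have hz1 : 0 < (z + 1).re := by simp; linarith
  obtain ⟨h1, h2⟩ := int_step z hz
  rw [FF, FF, ← integral_sub (FF_integrable z hz) (FF_integrable _ hz1)]
  rw [← neg_neg (Complex.log (z + 1) ^ 2 / 2 - Complex.log z ^ 2 / 2), ← h2,
    ← exp_wgt_integral _ hz1, ← sub_eq_add_neg, ← integral_sub (exp_wgt_integrable _ hz1) h1]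
  refine setIntegral_congr_fun measurableSet_Ioi fun t ht => ?_
  have ht0 : (t:ℂ) ≠ 0 := by exact_mod_cast (ne_of_gt ht)
  have he : Complex.exp t - 1 ≠ 0 := by
    have : (0:ℝ) < Real.exp t - 1 := by linarith [Real.add_one_le_exp t, Set.mem_Ioi.1 ht]
    exact_mod_cast this.ne'
  have e1 : Complex.exp (-(z + 1) * t) = Complex.exp (-z * t) * Complex.exp (-(t:ℂ)) := by
    rw [← Complex.exp_add]; ring_nf
  have e2 := Complex.exp_ne_zero (t:ℂ)
  simp only [bker, e1, Complex.exp_neg (t:ℂ)]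
  field_simp

lemma FF_tendsto (z : ℂ) (hz : 0 < z.re) :
    Tendsto (fun N : ℕ => FF (z + N)) atTop (𝓝 0) := by
  have : Tendsto (fun N : ℕ => FF (z + N)) atTop (𝓝 (∫ t in Set.Ioi (0:ℝ), (0:ℂ))) := by
    unfold FF
    refine tendsto_integral_of_dominated_convergence
      (fun t : ℝ => ‖Complex.exp (-z * t) * wgt t‖) ?_ (exp_wgt_integrable z hz).norm ?_ ?_
    · intro n
      exact ((meas_bker.mul (by fun_prop)).mul meas_wgt).aestronglyMeasurable
    · intro n
      filter_upwards [ae_restrict_mem measurableSet_Ioi] with t ht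
      rw [mul_assoc, norm_mul]
      refine (mul_le_of_le_one_left (norm_nonneg _) (ker_norm_le ht)).trans ?_
      rw [norm_mul, norm_mul]
      gcongr
      rw [Complex.norm_exp, Complex.norm_exp, Real.exp_le_exp]
      simp
      have := Set.mem_Ioi.1 ht
      have : (0:ℝ) ≤ n * t := by positivity
      linarith
    · filter_upwards [ae_restrict_mem measurableSet_Ioi] with t ht
      have h : Tendsto (fun n : ℕ => Complex.exp (-(z + n) * t)) atTop (𝓝 0) := by
        have h1 : ∀ n : ℕ, Complex.exp (-(z + n) * t) = Complex.exp (-z * t) * Complex.exp (-(t:ℂ)) ^ n := by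
          intro n; rw [← Complex.exp_nat_mul, ← Complex.exp_add]; ring_nf
        simp only [h1]
        have h2 : Tendsto (fun n : ℕ => Complex.exp (-(t:ℂ)) ^ n) atTop (𝓝 0) := by
          apply tendsto_pow_atTop_nhds_zero_of_norm_lt_one
          rw [Complex.norm_exp]
          simpa using ht
        simpa using h2.const_mul (Complex.exp (-z * t))
      simpa using (h.const_mul (bker t)).mul_const (wgt t)
  simpa using this

lemma FF_sum (z : ℂ) (hz : 0 < z.re) (N : ℕ) :
    FF z = FF (z + N) - ∑ k ∈ Finset.range N, Complex.log (((k:ℂ) + 1) + z) / (((k:ℂ) + 1) + z)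
      + (Complex.log (z + N) ^ 2 / 2 - Complex.log z ^ 2 / 2) := by
  induction N with
  | zero => simp
  | succ N ih =>
    have h := FF_step (z + N) (by simp; positivity)
    rw [Finset.sum_range_succ, show (N:ℂ) + 1 + z = z + N + 1 by ring]
    push_cast
    rw [← add_assoc]
    linear_combination ih + h

lemma sum_tendsto (z : ℂ) (hz : 0 < z.re) :
    Tendsto (fun N : ℕ => ∑ k ∈ Finset.range N, Complex.log (((k:ℂ) + 1) + z) / (((k:ℂ) + 1) + z)
      - Complex.log (z + N) ^ 2 / 2) atTop (𝓝 (-FF z - Complex.log z ^ 2 / 2)) := by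
  have h := (FF_tendsto z hz).add_const (-FF z - Complex.log z ^ 2 / 2)
  rw [zero_add] at h
  refine h.congr fun N => ?_
  linear_combination - FF_sum z hz N

lemma log_diff (z : ℂ) (hz : 0 < z.re) {x : ℝ} (hx : 0 < x) (hx2 : 2 * ‖z‖ ≤ x) :
    ‖Complex.log (z + x) - Real.log x‖ ≤ 3 / 2 * (‖z‖ / x) := by
  have hx0 : (x:ℂ) ≠ 0 := by exact_mod_cast hx.ne'
  have h0 : 1 + z / x ≠ 0 := by
    have : z + x ≠ 0 := by
      intro h
      have := congrArg Complex.re h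
      simp at this; linarith
    rw [show 1 + z / x = (z + x) / x by field_simp; ring]
    exact div_ne_zero this hx0
  have h1 : z + x = (1 + z / x) * x := by field_simp; ring
  rw [h1, Complex.log_mul_ofReal x hx _ h0, add_sub_cancel_left]
  have h2 : ‖z / x‖ = ‖z‖ / x := by rw [norm_div, Complex.norm_real, Real.norm_of_nonneg hx.le]
  rw [← h2]
  apply Complex.norm_log_one_add_half_le_self
  rw [h2, div_le_iff₀ hx]; linarith

lemma log_sq_tendsto (z : ℂ) (hz : 0 < z.re) :
    Tendsto (fun N : ℕ => Complex.log (z + N) ^ 2 / 2 - (Real.log N : ℂ) ^ 2 / 2) atTop (𝓝 0) := by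
  have hb : Tendsto (fun x : ℝ => (3 / 2 * (‖z‖ / x)) * (3 / 2 * (‖z‖ / x)) / 2 +
      3 / 2 * ‖z‖ * (Real.log x / x)) atTop (𝓝 0) := by
    have h1 : Tendsto (fun x : ℝ => ‖z‖ / x) atTop (𝓝 0) := tendsto_const_nhds.div_atTop tendsto_id
    have h2 : Tendsto (fun x : ℝ => Real.log x / x) atTop (𝓝 0) := by
      simpa using Real.isLittleO_log_id_atTop.tendsto_div_nhds_zero
    have h3 := h1.const_mul (3 / 2)
    simpa using ((h3.mul h3).div_const 2).add (h2.const_mul (3 / 2 * ‖z‖))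
  refine squeeze_zero_norm' ?_ (hb.comp tendsto_natCast_atTop_atTop)
  filter_upwards [tendsto_natCast_atTop_atTop.eventually (eventually_ge_atTop (2 * ‖z‖)),
    eventually_ge_atTop 1] with N h1 h2
  have h2' : (1:ℝ) ≤ N := by exact_mod_cast h2
  have hN : (0:ℝ) < N := by linarith
  have h3 := log_diff z hz hN h1
  have hl : 0 ≤ Real.log N := Real.log_nonneg h2'
  simp only [Complex.ofReal_natCast] at h3
  set d := Complex.log (z + N) - Real.log N with hd
  have : Complex.log (z + N) ^ 2 / 2 - (Real.log N : ℂ) ^ 2 / 2 = d * d / 2 + d * (Real.log N : ℂ) := by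
    rw [hd]; ring
  rw [this]
  refine (norm_add_le _ _).trans ?_
  simp only [norm_div, norm_mul, Complex.norm_real, Real.norm_of_nonneg hl, Function.comp]
  have e : 3 / 2 * ‖z‖ * (Real.log N / N) = 3 / 2 * (‖z‖ / N) * Real.log N := by ring
  rw [e]
  norm_num only [RCLike.norm_ofNat]
  gcongr

lemma psi_summable (z : ℂ) (hz : 0 < z.re) :
    Summable (fun n : ℕ => Complex.log (((n : ℂ) + 1) + z) / (((n : ℂ) + 1) + z)
      - Complex.log ((n : ℂ) + 1) / ((n : ℂ) + 1)) := by
  have hs : Summable (fun n : ℕ => (n:ℝ) ^ (-(3/2) : ℝ)) := Real.summable_nat_rpow.2 (by norm_num)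
  have hs1 := ((summable_nat_add_iff 1).2 hs).mul_left (4 * ‖z‖)
  refine Summable.of_norm_bounded_eventually_nat hs1 ?_
  filter_upwards [tendsto_natCast_atTop_atTop.eventually (eventually_ge_atTop (2 * ‖z‖))] with n hn
  set x : ℝ := (n:ℝ) + 1 with hx
  have hx1 : 1 ≤ x := by rw [hx]; linarith [n.cast_nonneg (α := ℝ)]
  have hx0 : 0 < x := by linarith
  have hc : (n:ℂ) + 1 = (x:ℂ) := by rw [hx]; push_cast; rfl
  have hd := log_diff z hz hx0 (by linarith)
  rw [hc, ← Complex.ofReal_log hx0.le, add_comm (x:ℂ) z]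
  set d := Complex.log (z + x) - Real.log x with hdd
  have hxc : (x:ℂ) ≠ 0 := by exact_mod_cast hx0.ne'
  have hnorm : x ≤ ‖z + x‖ := by
    refine le_trans ?_ (Complex.re_le_norm _)
    simp; linarith
  have hzx : z + x ≠ 0 := norm_pos_iff.1 (by linarith)
  have e : Complex.log (z + x) / (z + x) - (Real.log x : ℂ) / x =
      (d - z * (Real.log x : ℂ) / x) / (z + x) := by
    rw [hdd]; field_simp; ring
  have hl : 0 ≤ Real.log x := Real.log_nonneg hx1
  have hl2 : Real.log x ≤ x ^ (1/2:ℝ) / (1/2) := Real.log_le_rpow_div hx0.le (by norm_num)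
  have hr1 : 1 ≤ x ^ (1/2:ℝ) := Real.one_le_rpow hx1 (by norm_num)
  have hnum : ‖d - z * (Real.log x : ℂ) / x‖ ≤ 4 * ‖z‖ * x ^ (1/2:ℝ) / x := by
    refine (norm_sub_le _ _).trans ?_
    rw [norm_div, norm_mul, Complex.norm_real, Complex.norm_real, Real.norm_of_nonneg hl,
      Real.norm_of_nonneg hx0.le]
    refine (add_le_add_left hd _).trans ?_
    rw [← mul_div_assoc, ← add_div]
    gcongr
    nlinarith [norm_nonneg z]
  rw [e, norm_div]
  calc _ ≤ (4 * ‖z‖ * x ^ (1/2:ℝ) / x) / x := by gcongr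
    _ = 4 * ‖z‖ * (x ^ (1/2:ℝ) / x ^ (2:ℝ)) := by
      rw [Real.rpow_two]; field_simp
    _ = _ := by
      rw [← Real.rpow_sub hx0]; norm_num [hx]

lemma sum_Icc_range (N : ℕ) : ∑ j ∈ Finset.Icc 1 N, Real.log j / j =
    ∑ k ∈ Finset.range N, Real.log ((k:ℝ) + 1) / ((k:ℝ) + 1) := by
  induction N with
  | zero => simp
  | succ N ih => rw [Finset.sum_Icc_succ_top (by omega), Finset.sum_range_succ, ih]; push_cast; rfl

lemma gamma1_tendsto : Tendsto (fun n : ℕ =>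
    ∑ j ∈ Finset.Icc 1 n, Real.log j / j - (Real.log n) ^ 2 / 2) atTop (𝓝 gamma1) := by
  apply tendsto_nhds_limUnder
  have h := (Complex.continuous_re.tendsto _).comp (sum_tendsto 1 (by simp))
  refine ⟨_, (tendsto_add_atTop_iff_nat 1).1 (h.congr fun N => ?_)⟩
  have : (∑ k ∈ Finset.range N, Complex.log (((k:ℂ) + 1) + 1) / (((k:ℂ) + 1) + 1)
      - Complex.log (1 + N) ^ 2 / 2) = ((∑ k ∈ Finset.range N, Real.log ((k:ℝ) + 1 + 1) / ((k:ℝ) + 1 + 1)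
      - Real.log (1 + N) ^ 2 / 2 : ℝ) : ℂ) := by
    push_cast
    rw [Complex.ofReal_log (by positivity)]
    congr 1
    · refine Finset.sum_congr rfl fun k _ => ?_
      rw [Complex.ofReal_log (by positivity)]
      push_cast; rfl
    · push_cast; rfl
  simp only [Function.comp, this, Complex.ofReal_re]
  rw [sum_Icc_range, Finset.sum_range_succ']
  push_cast
  simp [add_comm (1:ℝ)]

theorem stmt12 (z : ℂ) (hz : 0 < z.re) :
    psi1 z - (1/2) * (Complex.log z) ^ 2 =
      -Complex.log z / z
      + ∫ t in Set.Ioi (0:ℝ), (1 / (Complex.exp (t : ℂ) - 1) - 1 / (t : ℂ))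
          * Complex.exp (-z * (t : ℂ)) * ((eulerGamma : ℂ) + (Real.log t : ℂ)) := by
  have h1 := (psi_summable z hz).hasSum.tendsto_sum_nat
  have h2 : Tendsto (fun N : ℕ => (((∑ j ∈ Finset.Icc 1 N, Real.log j / j
      - (Real.log N) ^ 2 / 2 : ℝ)) : ℂ)) atTop (𝓝 (gamma1 : ℂ)) :=
    (Complex.continuous_ofReal.tendsto _).comp gamma1_tendsto
  have h3 := ((sum_tendsto z hz).sub h2).add (log_sq_tendsto z hz)
  have h4 := tendsto_nhds_unique h1 (h3.congr fun N => ?_)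
  · rw [psi1, h4]
    change _ = _ + FF z
    ring
  · have : ∑ j ∈ Finset.Icc 1 N, Real.log j / j =
        ∑ k ∈ Finset.range N, Real.log ((k:ℝ) + 1) / ((k:ℝ) + 1) := by
      exact sum_Icc_range N
    rw [this, Finset.sum_sub_distrib]
    have h5 : ∑ k ∈ Finset.range N, Complex.log ((k:ℂ) + 1) / ((k:ℂ) + 1) =
        ((∑ k ∈ Finset.range N, Real.log ((k:ℝ) + 1) / ((k:ℝ) + 1) : ℝ) : ℂ) := by
      push_cast
      refine Finset.sum_congr rfl fun k _ => ?_
      rw [Complex.ofReal_log (by positivity)]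
      push_cast; rfl
    rw [h5]
    push_cast
    ring
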